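/- Let E : S¹ → ℝ² be a continuous rotating vector field, i.e., ⟨JE(x), x⟩ ≠ 0 for all x ∈ S¹. Then ⟨JE(x), x⟩ > 0 for all x ∈ S¹ (equivalently, rind(E) = +1) if and only if there exists a continuous homotopy H : [0,1] × S¹ → ℝ² with H(0,·) = E, H(1,·) = E⁺, and ⟨J H(t,x), x⟩ ≠ 0 for all t ∈ [0,1] and x ∈ S¹, where E⁺(x₁,x₂) = (x₂, −x₁). -/

import Mathlib

/-!
For each `x` the pairing `⟨JE(x), x⟩` is linear and continuous in the vector `E(x)`. By linearity
the vectors with positive pairing form a convex set, so a straight-line homotopy between two fields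
with positive pairing is admissible. By continuity the pairing at `x` is a continuous nonvanishing
function of time along any admissible homotopy, so its sign cannot change.
-/

open Set

/-- Counterclockwise rotation of the plane by `π/2`: `J(a,b) = (-b,a)`. -/
def J (p : ℝ × ℝ) : ℝ × ℝ := (-p.2, p.1)

/-- Euclidean inner product on `ℝ²`. -/
def dot (p q : ℝ × ℝ) : ℝ := p.1 * q.1 + p.2 * q.2

/-- The unit circle `S¹ ⊆ ℝ²`. -/
def unitCircle : Set (ℝ × ℝ) := {p | p.1 ^ 2 + p.2 ^ 2 = 1}

section AdmissibleHomotopy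

variable {X V : Type*} [TopologicalSpace X] [AddCommGroup V] [Module ℝ V] [TopologicalSpace V]
  {φ : X → V →L[ℝ] ℝ} {S : Set X} {E F : X → V}

/-- The fields `E` and `F` are joined by a homotopy over `S` along which the pairing of the field
with `φ` never vanishes. For `φ x v = ⟨Jv, x⟩` on the unit circle this is homotopy through rotating
fields. As for `ContinuousOn`, fields are total functions of which only the values on `S` matter. -/
def AdmissiblyHomotopicOn (φ : X → V →L[ℝ] ℝ) (S : Set X) (E F : X → V) : Prop :=
  ∃ H : ℝ × X → V,
    ContinuousOn H (Icc (0 : ℝ) 1 ×ˢ S) ∧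
    (∀ x ∈ S, H (0, x) = E x) ∧
    (∀ x ∈ S, H (1, x) = F x) ∧
    ∀ t ∈ Icc (0 : ℝ) 1, ∀ x ∈ S, φ x (H (t, x)) ≠ 0

theorem AdmissiblyHomotopicOn.pos_iff_pos (h : AdmissiblyHomotopicOn φ S E F) {x : X}
    (hx : x ∈ S) : 0 < φ x (E x) ↔ 0 < φ x (F x) := by
  obtain ⟨H, hH, hH₀, hH₁, hne⟩ := h
  have hcont : ContinuousOn (fun t : ℝ ↦ φ x (H (t, x))) (Icc 0 1) :=
    (φ x).continuous.comp_continuousOn (hH.comp (by fun_prop) fun t ht ↦ ⟨ht, hx⟩)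
  have hpos {s t : ℝ} (hs : s ∈ Icc (0 : ℝ) 1) (ht : t ∈ Icc (0 : ℝ) 1)
      (h : 0 < φ x (H (s, x))) : 0 < φ x (H (t, x)) :=
    isPreconnected_Icc.lt_of_ne hcont (fun r hr ↦ hne r hr x hx) ⟨s, hs, h⟩ ht
  have h₀ : (0 : ℝ) ∈ Icc (0 : ℝ) 1 := left_mem_Icc.mpr zero_le_one
  have h₁ : (1 : ℝ) ∈ Icc (0 : ℝ) 1 := right_mem_Icc.mpr zero_le_one
  rw [← hH₀ x hx, ← hH₁ x hx]
  exact ⟨hpos h₀ h₁, hpos h₁ h₀⟩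

variable [IsTopologicalAddGroup V] [ContinuousSMul ℝ V]

theorem AdmissiblyHomotopicOn.of_pos (hE : ContinuousOn E S) (hF : ContinuousOn F S)
    (hE_pos : ∀ x ∈ S, 0 < φ x (E x)) (hF_pos : ∀ x ∈ S, 0 < φ x (F x)) :
    AdmissiblyHomotopicOn φ S E F := by
  refine ⟨fun p ↦ AffineMap.lineMap (E p.2) (F p.2) p.1, ?_, by simp, by simp, ?_⟩
  · exact (hE.comp continuousOn_snd fun p hp ↦ hp.2).lineMap
      (hF.comp continuousOn_snd fun p hp ↦ hp.2) continuousOn_fst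
  · intro t ht x hx
    have hconvex : Convex ℝ {v | 0 < φ x v} := convex_halfSpace_gt (φ x).isLinear 0
    exact (hconvex.lineMap_mem (hE_pos x hx) (hF_pos x hx) ht).ne'

theorem rind_one_iff_admissibly_homotopic_to_Eplus_general
    (hE : ContinuousOn E S) (hF : ContinuousOn F S) (hF_pos : ∀ x ∈ S, 0 < φ x (F x)) :
    (∀ x ∈ S, 0 < φ x (E x)) ↔ AdmissiblyHomotopicOn φ S E F :=
  ⟨fun hE_pos ↦ .of_pos hE hF hE_pos hF_pos, fun h x hx ↦ (h.pos_iff_pos hx).mpr (hF_pos x hx)⟩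

end AdmissibleHomotopy

/-- The pairing `v ↦ ⟨Jv, x⟩`, as a continuous linear functional of `v`; the ring index of a
rotating field is its sign. -/
def rotationPairing (x : ℝ × ℝ) : ℝ × ℝ →L[ℝ] ℝ where
  toFun v := dot (J v) x
  map_add' v w := by simp only [dot, J, Prod.fst_add, Prod.snd_add]; ring
  map_smul' c v := by
    simp only [dot, J, Prod.smul_fst, Prod.smul_snd, smul_eq_mul, RingHom.id_apply]; ring
  cont := by simp only [dot, J]; fun_prop

/-- The reference field `E⁺(x₁,x₂) = (x₂,-x₁)`, of ring index `+1`. -/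
def Eplus (x : ℝ × ℝ) : ℝ × ℝ := (x.2, -x.1)

theorem continuous_Eplus : Continuous Eplus :=
  continuous_snd.prodMk continuous_fst.neg

theorem J_Eplus (x : ℝ × ℝ) : J (Eplus x) = x := by
  simp only [J, Eplus, neg_neg]

theorem dot_self_eq_one {x : ℝ × ℝ} (hx : x ∈ unitCircle) : dot x x = 1 := by
  simpa only [dot, ← sq, unitCircle, mem_ofPred_eq] using hx

theorem rotationPairing_Eplus_pos {x : ℝ × ℝ} (hx : x ∈ unitCircle) :
    0 < rotationPairing x (Eplus x) :=
  calc (0 : ℝ) < 1 := one_pos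
    _ = dot (J (Eplus x)) x := by rw [J_Eplus, dot_self_eq_one hx]

/-- Proposition 2.10(ii): a continuous rotating field `E` on `S¹` has `⟨JE(x), x⟩ > 0` on
all of `S¹` (ring index `+1`) if and only if `E` is admissibly homotopic to
`E⁺(x₁,x₂) = (x₂, -x₁)`. -/
theorem rind_one_iff_admissibly_homotopic_to_Eplus
    (E : ℝ × ℝ → ℝ × ℝ) (hE : ContinuousOn E unitCircle)
    (hrot : ∀ x ∈ unitCircle, dot (J (E x)) x ≠ 0) :
    (∀ x ∈ unitCircle, 0 < dot (J (E x)) x) ↔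
      ∃ H : ℝ × (ℝ × ℝ) → ℝ × ℝ,
        ContinuousOn H (Icc (0 : ℝ) 1 ×ˢ unitCircle) ∧
        (∀ x ∈ unitCircle, H (0, x) = E x) ∧
        (∀ x ∈ unitCircle, H (1, x) = (x.2, -x.1)) ∧
        ∀ t ∈ Icc (0 : ℝ) 1, ∀ x ∈ unitCircle, dot (J (H (t, x))) x ≠ 0 :=
  rind_one_iff_admissibly_homotopic_to_Eplus_general (φ := rotationPairing) hE
    continuous_Eplus.continuousOn fun _ hx ↦ rotationPairing_Eplus_pos hx
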